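/- Let 0 < β ≤ ∞, 0 < δ ≤ 1, and let T : M⁺ → M⁺ satisfy the quasilinearity conditions (i)–(iii). Let v, w be weights with V(x) = ∫₀ˣ v < ∞ for all x > 0. Then the inequality ‖T(∫₀ˣ h)‖_{L^β(w)} ≤ C ∫₀^∞ h V^{-1} holds for all nonnegative measurable h if and only if the inequality ‖T_{V^{2(1-1/δ)}}((∫₀ˣ h^δ V)^{1/δ})‖_{L^β(w)} ≤ C' ∫₀^∞ h v^{1-1/δ} holds for all nonnegative measurable h, where T_u(g) := T(g·u); moreover the best constants are equivalent. -/

import Mathlib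

open MeasureTheory ENNReal Set
open scoped ENNReal

/-- The weighted Lebesgue "norm" `‖f‖_{β,w,(0,∞)}` with `β ∈ (0,∞]`. -/
noncomputable def Lnorm (β : ℝ≥0∞) (w f : ℝ → ℝ≥0∞) : ℝ≥0∞ :=
  if β = ∞ then essSup (fun x => f x * w x) (volume.restrict (Ioi (0:ℝ)))
  else (∫⁻ x in Ioi (0:ℝ), f x ^ β.toReal * w x) ^ (1 / β.toReal)

/-- `V(x) = ∫₀ˣ v`. -/
noncomputable def Vint (v : ℝ → ℝ≥0∞) (x : ℝ) : ℝ≥0∞ := ∫⁻ t in Ioc (0:ℝ) x, v t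

/-! Write `V` for the primitive of `v`. Monotonicity and homogeneity reduce both implications to
pointwise bounds between the primitive of `h` and its power-`δ` transform.

The transform is dominated by a primitive: Hölder's inequality with exponents `1/δ` and `1/(1-δ)`,
together with `∫₀ˣ v V ≤ V(x)²`, bounds the transform of `h` by the primitive of `h v^{1-1/δ} V`.

Conversely, given `h`, put `k(y) = V(y)⁻² ∫_{V(t) ≤ 2V(y)} h(t) dt` and `g = k v^{1/δ}`. Half of the
`v`-mass of `(0, x]` lies where `V ≥ V(x)/2`, and there `k ≥ V(x)⁻² ∫₀ˣ h`, so `∫₀ˣ h` is at most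
`4^{1/δ}` times the transform of `g` at `x`. On the other side
`∫ g v^{1-1/δ} ≤ ∫ k v ≤ 8 ∫ h V⁻¹`, by Tonelli's theorem and `∫_{V ≥ s} V⁻² v ≤ 4/s`, which is
summed over the layers `s 2ⁿ ≤ V ≤ s 2ⁿ⁺¹`.
-/

/-- The primitive `x ↦ ∫_{t ≤ x} v dm` of `v` with respect to a measure `m` on a preorder. On `ℝ`
with Lebesgue measure restricted to `(0, ∞)` it is `Vint v`. -/
noncomputable def lprimitive {α : Type*} [Preorder α] [MeasurableSpace α] (m : Measure α)
    (v : α → ℝ≥0∞) (x : α) : ℝ≥0∞ :=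
  ∫⁻ t in Iic x, v t ∂m

/-- The inner power-`δ` transform `x ↦ (∫_{t ≤ x} h^δ V dm)^{1/δ} V(x)^{2(1 - 1/δ)}`, where `V` is
the primitive of the weight `v`; it replaces the primitive of `h` in the self-improved
inequality. -/
noncomputable def powerPrimitive {α : Type*} [Preorder α] [MeasurableSpace α] (m : Measure α)
    (v : α → ℝ≥0∞) (δ : ℝ) (h : α → ℝ≥0∞) (x : α) : ℝ≥0∞ :=
  lprimitive m (fun t => h t ^ δ * lprimitive m v t) x ^ (1 / δ) *
    lprimitive m v x ^ (2 * (1 - 1 / δ))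

/-- For measures `ν` and `lam` with `F y = ν (Iic y)`, the weight
`y ↦ lam {t | F t ≤ 2 F y} / F(y)²`. It is the test function showing that the transformed inequality
implies the original one. The factor `2` makes it at least `lam (Iic x) / F(x)²` on a set carrying
half of the `ν`-mass of `Iic x`. -/
noncomputable def doublingWeight {α : Type*} [Preorder α] [MeasurableSpace α] (ν lam : Measure α)
    (y : α) : ℝ≥0∞ :=
  lam {t | ν (Iic t) ≤ 2 * ν (Iic y)} / ν (Iic y) ^ 2

/-- A functional `Φ` on nonnegative functions is quasi-monotone with constant `c` if it is monotone
up to the factor `c`, jointly with subhomogeneity: `f ≤ a g` almost everywhere implies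
`Φ f ≤ c a Φ g`. The model is `Φ f = ‖T f‖` with `T` quasilinear. -/
def IsQuasiMonotone {α : Type*} [MeasurableSpace α] (m : Measure α) (c : ℝ≥0∞)
    (Φ : (α → ℝ≥0∞) → ℝ≥0∞) : Prop :=
  ∀ ⦃a : ℝ≥0∞⦄, a ≠ ∞ → ∀ ⦃f g : α → ℝ≥0∞⦄, (∀ᵐ x ∂m, f x ≤ a * g x) → Φ f ≤ c * a * Φ g

section ENNRealInequalities

theorem le_add_one_mul_of_ne_top_imp {a b K : ℝ≥0∞} (h : b ≠ ∞ → a ≤ K * b) :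
    a ≤ (K + 1) * b := by
  by_cases hb : b = ∞
  · simp [hb]
  · exact (h hb).trans (by gcongr; exact le_self_add)

theorem rpow_mul_rpow_neg_le_one (x : ℝ≥0∞) (a : ℝ) : x ^ a * x ^ (-a) ≤ 1 := by
  rw [ENNReal.rpow_neg]
  exact ENNReal.mul_inv_le_one _

theorem rpow_mul_rpow_one_sub_le (x : ℝ≥0∞) {a : ℝ} (ha : 0 < a) : x ^ a * x ^ (1 - a) ≤ x := by
  rcases eq_or_ne x 0 with rfl | h0
  · simp [ha]
  rcases eq_or_ne x ∞ with rfl | htop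
  · exact le_top
  · rw [← ENNReal.rpow_add _ _ h0 htop, add_sub_cancel, ENNReal.rpow_one]

theorem rpow_le_mul_rpow_rpow_mul {δ : ℝ} (hδ : 0 < δ) (hδ1 : δ ≤ 1) {h v : ℝ≥0∞} (hv : v ≠ ∞)
    (hu : h * v ^ (1 - 1 / δ) ≠ ∞) : h ^ δ ≤ (h * v ^ (1 - 1 / δ)) ^ δ * v ^ (1 - δ) := by
  rcases eq_or_ne v 0 with rfl | h0
  · rcases hδ1.eq_or_lt with rfl | hlt
    · simp
    have hneg : 1 - 1 / δ < 0 := sub_neg.2 (one_lt_one_div hδ hlt)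
    have h_zero : h = 0 := by
      by_contra hne
      exact hu (by rw [ENNReal.zero_rpow_of_neg hneg, ENNReal.mul_top hne])
    simp [h_zero, hδ]
  · have hexp : (1 - 1 / δ) * δ + (1 - δ) = 0 := by field_simp; ring
    rw [ENNReal.mul_rpow_of_nonneg _ _ hδ.le, ← ENNReal.rpow_mul, mul_assoc,
      ← ENNReal.rpow_add _ _ h0 hv, hexp, ENNReal.rpow_zero, mul_one]

theorem exists_mul_two_pow_near {s x : ℝ≥0∞} (hs : s ≠ 0) (hx : x ≠ ∞) (hsx : s ≤ x) :
    ∃ n : ℕ, s * 2 ^ n ≤ x ∧ x ≤ s * 2 ^ (n + 1) := by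
  lift s to NNReal using ne_top_of_le_ne_top hx hsx
  lift x to NNReal using hx
  norm_cast at hs hsx
  have hs_pos : 0 < s := pos_iff_ne_zero.2 hs
  obtain ⟨n, hle, hlt⟩ := exists_nat_pow_near ((one_le_div hs_pos).2 hsx) one_lt_two
  have hle' : s * 2 ^ n ≤ x := (le_div_iff₀' hs_pos).1 hle
  have hge' : x ≤ s * 2 ^ (n + 1) := (div_le_iff₀' hs_pos).1 hlt.le
  exact ⟨n, mod_cast hle', mod_cast hge'⟩

end ENNRealInequalities

section Measure

variable {Ω : Type*} [MeasurableSpace Ω] {μ : Measure Ω}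

-- Hölder's inequality with the exponents `1 / δ` and `1 / (1 - δ)`, raised to the power `1 / δ`.
theorem lintegral_rpow_mul_rpow_rpow_mul_le {δ : ℝ} (hδ : 0 < δ) (hδ1 : δ ≤ 1)
    {u v : Ω → ℝ≥0∞} (hu : AEMeasurable u μ) (hv : AEMeasurable v μ) {M : ℝ≥0∞}
    (hM : ∫⁻ x, v x ∂μ ≤ M) :
    (∫⁻ x, u x ^ δ * v x ^ (1 - δ) ∂μ) ^ (1 / δ) * M ^ (1 - 1 / δ) ≤ ∫⁻ x, u x ∂μ := by
  have h1δ : 0 ≤ 1 - δ := sub_nonneg.2 hδ1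
  have hexp : (1 - δ) * (1 / δ) = 1 / δ - 1 := by field_simp
  calc (∫⁻ x, u x ^ δ * v x ^ (1 - δ) ∂μ) ^ (1 / δ) * M ^ (1 - 1 / δ)
      ≤ ((∫⁻ x, u x ∂μ) ^ δ * M ^ (1 - δ)) ^ (1 / δ) * M ^ (1 - 1 / δ) := by
        gcongr
        exact (ENNReal.lintegral_mul_norm_pow_le hu hv hδ.le h1δ (by ring)).trans (by gcongr)
    _ = (∫⁻ x, u x ∂μ) * (M ^ (1 / δ - 1) * M ^ (-(1 / δ - 1))) := by
        rw [ENNReal.mul_rpow_of_nonneg _ _ (by positivity), ← ENNReal.rpow_mul, ← ENNReal.rpow_mul,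
          mul_one_div_cancel hδ.ne', ENNReal.rpow_one, hexp, neg_sub, mul_assoc]
    _ ≤ ∫⁻ x, u x ∂μ := mul_le_of_le_one_right zero_le (rpow_mul_rpow_neg_le_one _ _)

-- On the dyadic layer `s 2ⁿ ≤ f ≤ s 2ⁿ⁺¹` the integral is at most `(s 2ⁿ)⁻² s 2ⁿ⁺¹`.
theorem setLIntegral_inv_sq_le_of_measure_le {f : Ω → ℝ≥0∞} (hf : Measurable f)
    (hμ : ∀ b, μ {x | f x ≤ b} ≤ b) (s : ℝ≥0∞) :
    ∫⁻ x in {x | s ≤ f x}, (f x ^ 2)⁻¹ ∂μ ≤ 4 / s := by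
  rcases eq_or_ne s 0 with rfl | hs
  · simp [ENNReal.div_zero]
  let layer (n : ℕ) : Set Ω := {x | s * 2 ^ n ≤ f x ∧ f x ≤ s * 2 ^ (n + 1)}
  have hcover : {x | s ≤ f x} ⊆ {x | f x = ∞} ∪ ⋃ n, layer n := fun x hx => by
    by_cases htop : f x = ∞
    · exact Or.inl htop
    · exact Or.inr (mem_iUnion.2 (exists_mul_two_pow_near hs htop hx))
  have htop : ∫⁻ x in {x | f x = ∞}, (f x ^ 2)⁻¹ ∂μ = 0 := by
    rw [setLIntegral_congr_fun (g := fun _ => 0) (measurableSet_eq_fun hf measurable_const)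
      fun x (hx : f x = ∞) => by simp [hx], lintegral_zero]
  have hlayer (n : ℕ) : ∫⁻ x in layer n, (f x ^ 2)⁻¹ ∂μ ≤ 2 * s⁻¹ * 2⁻¹ ^ n := by
    have hmeas : MeasurableSet (layer n) :=
      (measurableSet_le measurable_const hf).inter (measurableSet_le hf measurable_const)
    set a := s * 2 ^ n with ha
    calc ∫⁻ x in layer n, (f x ^ 2)⁻¹ ∂μ
        ≤ ∫⁻ _ in layer n, (a ^ 2)⁻¹ ∂μ :=
          setLIntegral_mono' hmeas fun x hx => by gcongr; exact hx.1
      _ = (a ^ 2)⁻¹ * μ (layer n) := setLIntegral_const _ _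
      _ ≤ (a ^ 2)⁻¹ * (a * 2) := by
          gcongr
          rw [ha, mul_assoc, ← pow_succ]
          exact (measure_mono fun x hx => hx.2).trans (hμ _)
      _ = 2 * a⁻¹ * (a⁻¹ * a) := by rw [ENNReal.inv_pow]; ring
      _ ≤ 2 * a⁻¹ := mul_le_of_le_one_right zero_le (ENNReal.inv_mul_le_one a)
      _ = 2 * s⁻¹ * 2⁻¹ ^ n := by
          rw [ha, ENNReal.mul_inv (Or.inl hs) (Or.inr (by simp)), ENNReal.inv_pow, mul_assoc]
  calc ∫⁻ x in {x | s ≤ f x}, (f x ^ 2)⁻¹ ∂μ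
      ≤ ∫⁻ x in {x | f x = ∞}, (f x ^ 2)⁻¹ ∂μ + ∫⁻ x in ⋃ n, layer n, (f x ^ 2)⁻¹ ∂μ :=
        (lintegral_mono_set hcover).trans (lintegral_union_le _ _ _)
    _ ≤ ∑' n, ∫⁻ x in layer n, (f x ^ 2)⁻¹ ∂μ := by
        rw [htop, zero_add]
        exact lintegral_iUnion_le _ _
    _ ≤ ∑' n, 2 * s⁻¹ * 2⁻¹ ^ n := ENNReal.tsum_le_tsum hlayer
    _ = 4 / s := by
        rw [ENNReal.tsum_mul_left, ENNReal.tsum_geometric, ENNReal.one_sub_inv_two, inv_inv,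
          div_eq_mul_inv]
        ring

end Measure

theorem monotone_measure_Iic {α : Type*} [Preorder α] [MeasurableSpace α] (ν : Measure α) :
    Monotone fun x => ν (Iic x) :=
  fun _ _ hxy => measure_mono (Iic_subset_Iic.2 hxy)

theorem monotone_lprimitive {α : Type*} [Preorder α] [MeasurableSpace α] (m : Measure α)
    (v : α → ℝ≥0∞) : Monotone (lprimitive m v) :=
  fun _ _ hxy => lintegral_mono_set (Iic_subset_Iic.2 hxy)

section OrderClosedTopology

variable {α : Type*} [LinearOrder α] [TopologicalSpace α] [OrderClosedTopology α]
  [MeasurableSpace α] [BorelSpace α]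

theorem measurable_lprimitive (m : Measure α) (v : α → ℝ≥0∞) : Measurable (lprimitive m v) :=
  (monotone_lprimitive m v).measurable

theorem withDensity_Iic (m : Measure α) (v : α → ℝ≥0∞) (x : α) :
    m.withDensity v (Iic x) = lprimitive m v x :=
  withDensity_apply _ measurableSet_Iic

theorem lintegral_inv_withDensity_Iic (m : Measure α) (v : α → ℝ≥0∞) {h : α → ℝ≥0∞}
    (hh : Measurable h) :
    ∫⁻ t, (m.withDensity v (Iic t))⁻¹ ∂m.withDensity h = ∫⁻ t, h t / lprimitive m v t ∂m := by
  simp only [withDensity_Iic]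
  exact lintegral_withDensity_eq_lintegral_mul m hh (measurable_lprimitive m v).inv

theorem lprimitive_mul_lprimitive_le_sq (m : Measure α) {v : α → ℝ≥0∞} (hv : Measurable v) (x : α) :
    lprimitive m (fun t => v t * lprimitive m v t) x ≤ lprimitive m v x ^ 2 :=
  calc ∫⁻ t in Iic x, v t * lprimitive m v t ∂m
      ≤ ∫⁻ t in Iic x, v t * lprimitive m v x ∂m :=
        setLIntegral_mono' measurableSet_Iic fun t ht => by
          gcongr
          exact monotone_lprimitive m v ht
    _ = lprimitive m v x ^ 2 := by rw [lintegral_mul_const _ hv, sq]; rfl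

theorem powerPrimitive_le_lprimitive {δ : ℝ} (hδ : 0 < δ) (hδ1 : δ ≤ 1) {m : Measure α}
    {v h : α → ℝ≥0∞} (hv : Measurable v) (hh : Measurable h) (hv_top : ∀ᵐ t ∂m, v t < ∞)
    (hfin : ∫⁻ t, h t * v t ^ (1 - 1 / δ) ∂m ≠ ∞) (x : α) :
    powerPrimitive m v δ h x ≤
      lprimitive m (fun t => h t * v t ^ (1 - 1 / δ) * lprimitive m v t) x := by
  have h1δ : 0 ≤ 1 - δ := sub_nonneg.2 hδ1
  have hu : Measurable fun t => h t * v t ^ (1 - 1 / δ) := hh.mul (hv.pow_const _)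
  have hV : Measurable (lprimitive m v) := measurable_lprimitive m v
  have hpoint : ∀ᵐ t ∂m, h t ^ δ * lprimitive m v t ≤
      (h t * v t ^ (1 - 1 / δ) * lprimitive m v t) ^ δ * (v t * lprimitive m v t) ^ (1 - δ) := by
    filter_upwards [hv_top, ae_lt_top hu hfin] with t hvt hut
    have hVt : lprimitive m v t = lprimitive m v t ^ δ * lprimitive m v t ^ (1 - δ) := by
      rw [← ENNReal.rpow_add_of_nonneg _ _ hδ.le h1δ, add_sub_cancel, ENNReal.rpow_one]
    calc h t ^ δ * lprimitive m v t
        ≤ ((h t * v t ^ (1 - 1 / δ)) ^ δ * v t ^ (1 - δ)) *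
            (lprimitive m v t ^ δ * lprimitive m v t ^ (1 - δ)) := by
          rw [← hVt]
          gcongr
          exact rpow_le_mul_rpow_rpow_mul hδ hδ1 hvt.ne hut.ne
      _ = _ := by
          rw [ENNReal.mul_rpow_of_nonneg _ (lprimitive m v t) hδ.le,
            ENNReal.mul_rpow_of_nonneg _ (lprimitive m v t) h1δ]
          ring
  calc powerPrimitive m v δ h x
      ≤ (∫⁻ t in Iic x, (h t * v t ^ (1 - 1 / δ) * lprimitive m v t) ^ δ *
          (v t * lprimitive m v t) ^ (1 - δ) ∂m) ^ (1 / δ) *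
            (lprimitive m v x ^ 2) ^ (1 - 1 / δ) := by
        rw [powerPrimitive, ENNReal.rpow_mul, ENNReal.rpow_two]
        gcongr ?_ ^ _ * _
        exact lintegral_mono_ae (ae_restrict_of_ae hpoint)
    _ ≤ _ := lintegral_rpow_mul_rpow_rpow_mul_le hδ hδ1 (hu.mul hV).aemeasurable
        (hv.mul hV).aemeasurable (lprimitive_mul_lprimitive_le_sq m hv x)

theorem measurable_doublingWeight (ν lam : Measure α) : Measurable (doublingWeight ν lam) := by
  have hmono : Monotone fun y => lam {t | ν (Iic t) ≤ 2 * ν (Iic y)} := fun y z hyz => by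
    have hF : ν (Iic y) ≤ ν (Iic z) := monotone_measure_Iic ν hyz
    exact measure_mono fun t ht => le_trans (b := 2 * ν (Iic y)) ht (by gcongr)
  exact hmono.measurable.div ((monotone_measure_Iic ν).measurable.pow_const 2)

theorem measure_Iic_eq_zero_of_lintegral_inv_ne_top {ν lam : Measure α}
    (hfin : ∫⁻ t, (ν (Iic t))⁻¹ ∂lam ≠ ∞) {x : α} (hx : ν (Iic x) = 0) : lam (Iic x) = 0 := by
  refine measure_mono_null (fun t ht => ?_) (measure_eq_top_of_lintegral_ne_top
    (monotone_measure_Iic ν).measurable.inv.aemeasurable hfin)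
  exact ENNReal.inv_eq_top.2 (measure_mono_null (Iic_subset_Iic.2 ht) hx)

end OrderClosedTopology

section SecondCountableTopology

variable {α : Type*} [LinearOrder α] [TopologicalSpace α] [OrderTopology α]
  [SecondCountableTopology α] [MeasurableSpace α]

theorem measure_le_of_forall_measure_Iic_le {μ : Measure α} {S : Set α} (hS : IsLowerSet S)
    {b : ℝ≥0∞} (h : ∀ x ∈ S, μ (Iic x) ≤ b) : μ S ≤ b := by
  rcases S.eq_empty_or_nonempty with rfl | hne
  · simp
  have : Nonempty S := hne.to_subtype
  have : OrdConnected S := hS.ordConnected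
  obtain ⟨u, hu_mono, hu_tendsto⟩ := Filter.exists_seq_monotone_tendsto_atTop_atTop S
  have hcover : S ⊆ ⋃ n, Iic (u n : α) := fun x hx =>
    mem_iUnion.2 (hu_tendsto.eventually_ge_atTop ⟨x, hx⟩).exists
  have hmono : Monotone fun n => Iic (u n : α) := fun _ _ hij => Iic_subset_Iic.2 (hu_mono hij)
  calc μ S ≤ μ (⋃ n, Iic (u n : α)) := measure_mono hcover
    _ = ⨆ n, μ (Iic (u n : α)) := hmono.measure_iUnion
    _ ≤ b := iSup_le fun n => h _ (u n).2

theorem measure_setOf_measure_Iic_le (μ : Measure α) (b : ℝ≥0∞) :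
    μ {y | μ (Iic y) ≤ b} ≤ b :=
  measure_le_of_forall_measure_Iic_le
    (fun _ _ hyx hx => (monotone_measure_Iic μ hyx).trans hx) fun _ hx => hx

theorem ae_lt_top_of_ae_lprimitive_lt_top {m : Measure α} {v : α → ℝ≥0∞} (hv : Measurable v)
    (hV : ∀ᵐ x ∂m, lprimitive m v x < ∞) : ∀ᵐ x ∂m, v x < ∞ := by
  set N : Set α := {x | v x = ∞}
  set L : Set α := {x | lprimitive m v x < ∞}
  have hN : MeasurableSet N := measurableSet_eq_fun hv measurable_const
  have hL : IsLowerSet L := fun _ _ hyx hx => (monotone_lprimitive m v hyx).trans_lt hx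
  have hN_Iic (x : α) (hx : x ∈ L) : m.restrict N (Iic x) ≤ 0 := by
    rw [Measure.restrict_apply' hN, inter_comm, ← Measure.restrict_apply hN]
    exact (measure_eq_top_of_lintegral_ne_top hv.aemeasurable hx.ne).le
  have hN_zero : m N ≤ 0 :=
    calc m N ≤ m (L ∩ N) := measure_mono_ae (hV.mono fun _ hxL hxN => ⟨hxL, hxN⟩)
      _ = m.restrict N L := (Measure.restrict_apply' hN).symm
      _ ≤ 0 := measure_le_of_forall_measure_Iic_le hL hN_Iic
  filter_upwards [measure_eq_zero_iff_ae_notMem.1 (nonpos_iff_eq_zero.1 hN_zero)] with x hx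
    using lt_top_iff_ne_top.2 hx

theorem half_measure_Iic_le {μ : Measure α} {x : α} (hx : μ (Iic x) ≠ ∞) :
    μ (Iic x) / 2 ≤ μ (Iic x ∩ {y | μ (Iic x) / 2 ≤ μ (Iic y)}) := by
  have hsub : Iic x \ {y | μ (Iic x) / 2 ≤ μ (Iic y)} ⊆ {y | μ (Iic y) ≤ μ (Iic x) / 2} :=
    fun y hy => (show μ (Iic y) < μ (Iic x) / 2 from not_le.1 hy.2).le
  have hrest : μ (Iic x \ {y | μ (Iic x) / 2 ≤ μ (Iic y)}) ≤ μ (Iic x) / 2 :=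
    (measure_mono hsub).trans (measure_setOf_measure_Iic_le μ _)
  refine (ENNReal.add_le_add_iff_right (ENNReal.div_ne_top hx two_ne_zero)).1 ?_
  calc μ (Iic x) / 2 + μ (Iic x) / 2 = μ (Iic x) := ENNReal.add_halves _
    _ ≤ μ (Iic x ∩ {y | μ (Iic x) / 2 ≤ μ (Iic y)}) +
          μ (Iic x \ {y | μ (Iic x) / 2 ≤ μ (Iic y)}) := measure_le_inter_add_sdiff μ _ _
    _ ≤ μ (Iic x ∩ {y | μ (Iic x) / 2 ≤ μ (Iic y)}) + μ (Iic x) / 2 := by gcongr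

variable [BorelSpace α]

theorem lintegral_doublingWeight_le (ν lam : Measure α) [SFinite ν] [SFinite lam] :
    ∫⁻ y, doublingWeight ν lam y ∂ν ≤ 8 * ∫⁻ t, (ν (Iic t))⁻¹ ∂lam := by
  have hF : Measurable fun y => ν (Iic y) := (monotone_measure_Iic ν).measurable
  let E : Set (α × α) := {p | ν (Iic p.2) ≤ 2 * ν (Iic p.1)}
  have hE : MeasurableSet E :=
    measurableSet_le (hF.comp measurable_snd) ((hF.comp measurable_fst).const_mul 2)
  let K : α × α → ℝ≥0∞ := E.indicator fun p => (ν (Iic p.1) ^ 2)⁻¹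
  have hK : Measurable K := ((hF.comp measurable_fst).pow_const 2).inv.indicator hE
  have hset (t : α) : {y | (y, t) ∈ E} = {y | ν (Iic t) / 2 ≤ ν (Iic y)} := by
    ext y
    exact (ENNReal.div_le_iff_le_mul (by simp) (by simp)).trans (by rw [mul_comm]; rfl) |>.symm
  calc ∫⁻ y, doublingWeight ν lam y ∂ν = ∫⁻ y, ∫⁻ t, K (y, t) ∂lam ∂ν := by
        refine lintegral_congr fun y => ?_
        rw [doublingWeight, ENNReal.div_eq_inv_mul]
        exact (lintegral_indicator_const (measurable_prodMk_left hE) _).symm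
    _ = ∫⁻ t, ∫⁻ y, K (y, t) ∂ν ∂lam := lintegral_lintegral_swap hK.aemeasurable
    _ = ∫⁻ t, ∫⁻ y in {y | ν (Iic t) / 2 ≤ ν (Iic y)}, (ν (Iic y) ^ 2)⁻¹ ∂ν ∂lam := by
        refine lintegral_congr fun t => ?_
        rw [← hset]
        exact lintegral_indicator (measurable_prodMk_right hE) _
    _ ≤ ∫⁻ t, 4 / (ν (Iic t) / 2) ∂lam := lintegral_mono fun t =>
        setLIntegral_inv_sq_le_of_measure_le hF (measure_setOf_measure_Iic_le ν) _
    _ = ∫⁻ t, 8 * (ν (Iic t))⁻¹ ∂lam := by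
        refine lintegral_congr fun t => ?_
        rw [div_eq_mul_inv, div_eq_mul_inv,
          ENNReal.mul_inv (Or.inr (by simp)) (Or.inr (by simp)), inv_inv]
        ring
    _ = 8 * ∫⁻ t, (ν (Iic t))⁻¹ ∂lam := lintegral_const_mul _ hF.inv

theorem le_setLIntegral_doublingWeight_rpow {δ : ℝ} (hδ : 0 ≤ δ) (ν lam : Measure α) {x : α}
    (hx : ν (Iic x) ≠ ∞) :
    (lam (Iic x) / ν (Iic x) ^ 2) ^ δ * (ν (Iic x) / 2) * (ν (Iic x) / 2) ≤
      ∫⁻ y in Iic x, doublingWeight ν lam y ^ δ * ν (Iic y) ∂ν := by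
  have hF : Measurable fun y => ν (Iic y) := (monotone_measure_Iic ν).measurable
  set S : Set α := Iic x ∩ {y | ν (Iic x) / 2 ≤ ν (Iic y)}
  have hS_meas : MeasurableSet S := measurableSet_Iic.inter (measurableSet_le measurable_const hF)
  have hweight {y : α} (hy : y ∈ S) : lam (Iic x) / ν (Iic x) ^ 2 ≤ doublingWeight ν lam y := by
    have hdouble : ν (Iic x) ≤ 2 * ν (Iic y) := by
      rw [mul_comm]
      exact (ENNReal.div_le_iff_le_mul (by simp) (by simp)).1 hy.2
    have hsub : Iic x ⊆ {t | ν (Iic t) ≤ 2 * ν (Iic y)} := fun t ht =>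
      (monotone_measure_Iic ν ht).trans hdouble
    exact ENNReal.div_le_div (measure_mono hsub)
      (pow_le_pow_left' (monotone_measure_Iic ν hy.1) 2)
  calc (lam (Iic x) / ν (Iic x) ^ 2) ^ δ * (ν (Iic x) / 2) * (ν (Iic x) / 2)
      ≤ (lam (Iic x) / ν (Iic x) ^ 2) ^ δ * (ν (Iic x) / 2) * ν S := by
        gcongr
        exact half_measure_Iic_le hx
    _ = ∫⁻ _ in S, (lam (Iic x) / ν (Iic x) ^ 2) ^ δ * (ν (Iic x) / 2) ∂ν :=
        (setLIntegral_const _ _).symm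
    _ ≤ ∫⁻ y in S, doublingWeight ν lam y ^ δ * ν (Iic y) ∂ν :=
        setLIntegral_mono' hS_meas fun y hy => by
          gcongr
          · exact hweight hy
          · exact hy.2
    _ ≤ ∫⁻ y in Iic x, doublingWeight ν lam y ^ δ * ν (Iic y) ∂ν :=
        lintegral_mono_set inter_subset_left

theorem measure_Iic_le_doublingWeight {δ : ℝ} (hδ : 0 < δ) {ν lam : Measure α}
    (hfin : ∫⁻ t, (ν (Iic t))⁻¹ ∂lam ≠ ∞) {x : α} (hx : ν (Iic x) ≠ ∞) :
    lam (Iic x) ≤ 4 ^ (1 / δ) *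
      ((∫⁻ y in Iic x, doublingWeight ν lam y ^ δ * ν (Iic y) ∂ν) ^ (1 / δ) *
        ν (Iic x) ^ (2 * (1 - 1 / δ))) := by
  rcases eq_or_ne (ν (Iic x)) 0 with h0 | h0
  · simp [measure_Iic_eq_zero_of_lintegral_inv_ne_top hfin h0]
  set F := ν (Iic x)
  set I := ∫⁻ y in Iic x, doublingWeight ν lam y ^ δ * ν (Iic y) ∂ν
  have hexp : 2 * (1 / δ) + 2 * (1 - 1 / δ) = 2 := by ring
  have hlower : (lam (Iic x) / F ^ 2) ^ δ * F ^ (2 : ℝ) ≤ 4 * I := by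
    calc (lam (Iic x) / F ^ 2) ^ δ * F ^ (2 : ℝ)
        = (lam (Iic x) / F ^ 2) ^ δ * (2 * (F / 2)) * (2 * (F / 2)) := by
          rw [ENNReal.mul_div_cancel (by simp) (by simp), ENNReal.rpow_two]
          ring
      _ = 4 * ((lam (Iic x) / F ^ 2) ^ δ * (F / 2) * (F / 2)) := by ring
      _ ≤ 4 * I := by
          gcongr
          exact le_setLIntegral_doublingWeight_rpow hδ.le ν lam hx
  calc lam (Iic x) = lam (Iic x) / F ^ 2 * F ^ (2 : ℝ) := by
        rw [ENNReal.rpow_two, ENNReal.div_mul_cancel (pow_ne_zero 2 h0) (ENNReal.pow_ne_top hx)]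
    _ = ((lam (Iic x) / F ^ 2) ^ δ * F ^ (2 : ℝ)) ^ (1 / δ) * F ^ (2 * (1 - 1 / δ)) := by
        rw [ENNReal.mul_rpow_of_nonneg _ _ (by positivity), ← ENNReal.rpow_mul, ← ENNReal.rpow_mul,
          mul_one_div_cancel hδ.ne', ENNReal.rpow_one, mul_assoc, ← ENNReal.rpow_add _ _ h0 hx,
          hexp]
    _ ≤ (4 * I) ^ (1 / δ) * F ^ (2 * (1 - 1 / δ)) := by gcongr
    _ = 4 ^ (1 / δ) * (I ^ (1 / δ) * F ^ (2 * (1 - 1 / δ))) := by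
        rw [ENNReal.mul_rpow_of_nonneg _ _ (by positivity), mul_assoc]

theorem exists_lprimitive_le_powerPrimitive {δ : ℝ} (hδ : 0 < δ) {m : Measure α} [SFinite m]
    {v h : α → ℝ≥0∞} (hv : Measurable v) (hh : Measurable h)
    (hfin : ∫⁻ t, h t / lprimitive m v t ∂m ≠ ∞) :
    ∃ g : α → ℝ≥0∞, Measurable g ∧
      ∫⁻ t, g t * v t ^ (1 - 1 / δ) ∂m ≤ 8 * ∫⁻ t, h t / lprimitive m v t ∂m ∧
      ∀ x, lprimitive m v x < ∞ → lprimitive m h x ≤ 4 ^ (1 / δ) * powerPrimitive m v δ g x := by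
  have hδ' : 0 < 1 / δ := one_div_pos.2 hδ
  set ν := m.withDensity v
  set k := doublingWeight ν (m.withDensity h)
  have hk : Measurable k := measurable_doublingWeight _ _
  rw [← lintegral_inv_withDensity_Iic m v hh] at hfin ⊢
  refine ⟨fun t => v t ^ (1 / δ) * k t, (hv.pow_const _).mul hk, ?_, fun x hx => ?_⟩
  · calc ∫⁻ t, v t ^ (1 / δ) * k t * v t ^ (1 - 1 / δ) ∂m ≤ ∫⁻ t, v t * k t ∂m := by
          refine lintegral_mono fun t => ?_
          rw [mul_right_comm]
          gcongr
          exact rpow_mul_rpow_one_sub_le _ hδ'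
      _ = ∫⁻ t, k t ∂ν := (lintegral_withDensity_eq_lintegral_mul m hv hk).symm
      _ ≤ _ := lintegral_doublingWeight_le _ _
  · have hpow : ∫⁻ t in Iic x, k t ^ δ * ν (Iic t) ∂ν =
        lprimitive m (fun t => (v t ^ (1 / δ) * k t) ^ δ * lprimitive m v t) x := by
      refine (setLIntegral_withDensity_eq_setLIntegral_mul m hv
        ((hk.pow_const δ).mul (monotone_measure_Iic ν).measurable) measurableSet_Iic).trans ?_
      refine lintegral_congr fun t => ?_
      simp only [Pi.mul_apply, ν, withDensity_Iic]
      rw [ENNReal.mul_rpow_of_nonneg _ _ hδ.le, ← ENNReal.rpow_mul, one_div_mul_cancel hδ.ne',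
        ENNReal.rpow_one, mul_assoc]
    have hbound := measure_Iic_le_doublingWeight hδ hfin (x := x)
      (by rw [withDensity_Iic]; exact hx.ne)
    rwa [hpow, withDensity_Iic, withDensity_Iic] at hbound

theorem IsQuasiMonotone.powerPrimitive_le {δ : ℝ} (hδ : 0 < δ) (hδ1 : δ ≤ 1) {m : Measure α}
    {c C : ℝ≥0∞} {Φ : (α → ℝ≥0∞) → ℝ≥0∞} (hΦ : IsQuasiMonotone m c Φ) {v : α → ℝ≥0∞}
    (hv : Measurable v) (hV : ∀ᵐ x ∂m, lprimitive m v x < ∞)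
    (H : ∀ h, Measurable h → Φ (lprimitive m h) ≤ C * ∫⁻ t, h t / lprimitive m v t ∂m)
    {h : α → ℝ≥0∞} (hh : Measurable h) (hfin : ∫⁻ t, h t * v t ^ (1 - 1 / δ) ∂m ≠ ∞) :
    Φ (powerPrimitive m v δ h) ≤ c * C * ∫⁻ t, h t * v t ^ (1 - 1 / δ) ∂m := by
  set g : α → ℝ≥0∞ := fun t => h t * v t ^ (1 - 1 / δ) * lprimitive m v t
  have hg : Measurable g := (hh.mul (hv.pow_const _)).mul (measurable_lprimitive m v)
  have hle : ∀ᵐ x ∂m, powerPrimitive m v δ h x ≤ 1 * lprimitive m g x := ae_of_all _ fun x => by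
    rw [one_mul]
    exact powerPrimitive_le_lprimitive hδ hδ1 hv hh (ae_lt_top_of_ae_lprimitive_lt_top hv hV) hfin x
  calc Φ (powerPrimitive m v δ h) ≤ c * 1 * Φ (lprimitive m g) := hΦ ENNReal.one_ne_top hle
    _ ≤ c * 1 * (C * ∫⁻ t, g t / lprimitive m v t ∂m) := by gcongr; exact H g hg
    _ ≤ c * 1 * (C * ∫⁻ t, h t * v t ^ (1 - 1 / δ) ∂m) := by
        gcongr with t
        exact (mul_div_assoc _ _ _).trans_le
          (mul_le_of_le_one_right zero_le ENNReal.div_self_le_one)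
    _ = c * C * ∫⁻ t, h t * v t ^ (1 - 1 / δ) ∂m := by rw [mul_one, mul_assoc]

theorem IsQuasiMonotone.lprimitive_le {δ : ℝ} (hδ : 0 < δ) {m : Measure α} [SFinite m]
    {c C : ℝ≥0∞} {Φ : (α → ℝ≥0∞) → ℝ≥0∞} (hΦ : IsQuasiMonotone m c Φ) {v : α → ℝ≥0∞}
    (hv : Measurable v) (hV : ∀ᵐ x ∂m, lprimitive m v x < ∞)
    (H : ∀ h, Measurable h →
      Φ (powerPrimitive m v δ h) ≤ C * ∫⁻ t, h t * v t ^ (1 - 1 / δ) ∂m)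
    {h : α → ℝ≥0∞} (hh : Measurable h) (hfin : ∫⁻ t, h t / lprimitive m v t ∂m ≠ ∞) :
    Φ (lprimitive m h) ≤ c * 4 ^ (1 / δ) * C * 8 * ∫⁻ t, h t / lprimitive m v t ∂m := by
  obtain ⟨g, hg, hg_int, hg_le⟩ := exists_lprimitive_le_powerPrimitive hδ hv hh hfin
  have h4 : (4 : ℝ≥0∞) ^ (1 / δ) ≠ ∞ := ENNReal.rpow_ne_top_of_nonneg (by positivity) (by simp)
  calc Φ (lprimitive m h) ≤ c * 4 ^ (1 / δ) * Φ (powerPrimitive m v δ g) := hΦ h4 (hV.mono hg_le)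
    _ ≤ c * 4 ^ (1 / δ) * (C * (8 * ∫⁻ t, h t / lprimitive m v t ∂m)) := by
        gcongr
        exact (H g hg).trans (by gcongr)
    _ = c * 4 ^ (1 / δ) * C * 8 * ∫⁻ t, h t / lprimitive m v t ∂m := by ring

theorem selfimprove_s_one_iterated_general {δ : ℝ} (hδ : 0 < δ) (hδ1 : δ ≤ 1) {m : Measure α}
    [SFinite m] {c : ℝ≥0∞} (hc : c < ∞) {Φ : (α → ℝ≥0∞) → ℝ≥0∞} (hΦ : IsQuasiMonotone m c Φ)
    {v : α → ℝ≥0∞} (hv : Measurable v) (hV : ∀ᵐ x ∂m, lprimitive m v x < ∞) :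
    (∃ C : ℝ≥0∞, C < ∞ ∧ ∀ h : α → ℝ≥0∞, Measurable h →
        Φ (lprimitive m h) ≤ C * ∫⁻ t, h t / lprimitive m v t ∂m)
    ↔ (∃ C' : ℝ≥0∞, C' < ∞ ∧ ∀ h : α → ℝ≥0∞, Measurable h →
        Φ (powerPrimitive m v δ h) ≤ C' * ∫⁻ t, h t * v t ^ (1 - 1 / δ) ∂m) := by
  constructor
  · rintro ⟨C, hC, H⟩
    exact ⟨c * C + 1, by finiteness, fun h hh =>
      le_add_one_mul_of_ne_top_imp (hΦ.powerPrimitive_le hδ hδ1 hv hV H hh)⟩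
  · rintro ⟨C, hC, H⟩
    exact ⟨c * 4 ^ (1 / δ) * C * 8 + 1, by finiteness, fun h hh =>
      le_add_one_mul_of_ne_top_imp (hΦ.lprimitive_le hδ hv hV H hh)⟩

end SecondCountableTopology

theorem lprimitive_restrict_Ioi (v : ℝ → ℝ≥0∞) :
    lprimitive (volume.restrict (Ioi (0 : ℝ))) v = Vint v := by
  funext x
  rw [lprimitive, Measure.restrict_restrict measurableSet_Iic, inter_comm, Ioi_inter_Iic, Vint]

theorem powerPrimitive_restrict_Ioi (v : ℝ → ℝ≥0∞) (δ : ℝ) (h : ℝ → ℝ≥0∞) :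
    powerPrimitive (volume.restrict (Ioi (0 : ℝ))) v δ h = fun x =>
      (∫⁻ t in Ioc (0 : ℝ) x, h t ^ δ * Vint v t) ^ (1 / δ) * Vint v x ^ (2 * (1 - 1 / δ)) := by
  funext x
  simp only [powerPrimitive, lprimitive_restrict_Ioi]
  rfl

theorem Lnorm_le_const_mul {β : ℝ≥0∞} (hβ : 0 < β) (w : ℝ → ℝ≥0∞) {f g : ℝ → ℝ≥0∞} {c : ℝ≥0∞}
    (hc : c ≠ ∞) (h : ∀ᵐ x ∂(volume.restrict (Ioi (0 : ℝ))), f x ≤ c * g x) :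
    Lnorm β w f ≤ c * Lnorm β w g := by
  unfold Lnorm
  split_ifs with hβ_top
  · rw [← ENNReal.essSup_const_mul]
    refine essSup_mono_ae ?_
    filter_upwards [h] with x hx
    rw [← mul_assoc]
    gcongr
  · have hp : 0 < β.toReal := ENNReal.toReal_pos hβ.ne' hβ_top
    have hc_rpow : (c ^ β.toReal) ^ (1 / β.toReal) = c := by
      rw [← ENNReal.rpow_mul, mul_one_div_cancel hp.ne', ENNReal.rpow_one]
    calc (∫⁻ x in Ioi (0 : ℝ), f x ^ β.toReal * w x) ^ (1 / β.toReal)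
        ≤ (∫⁻ x in Ioi (0 : ℝ), c ^ β.toReal * (g x ^ β.toReal * w x)) ^ (1 / β.toReal) := by
          gcongr ?_ ^ _
          refine lintegral_mono_ae ?_
          filter_upwards [h] with x hx
          rw [← mul_assoc, ← ENNReal.mul_rpow_of_nonneg _ _ hp.le]
          gcongr
      _ = c * (∫⁻ x in Ioi (0 : ℝ), g x ^ β.toReal * w x) ^ (1 / β.toReal) := by
          rw [lintegral_const_mul' _ _ (ENNReal.rpow_ne_top_of_nonneg hp.le hc),
            ENNReal.mul_rpow_of_nonneg _ _ (by positivity), hc_rpow]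

theorem isQuasiMonotone_Lnorm_comp {β : ℝ≥0∞} (hβ : 0 < β) (w : ℝ → ℝ≥0∞)
    {T : (ℝ → ℝ≥0∞) → ℝ → ℝ≥0∞}
    (hT_smul : ∀ (a : ℝ≥0∞) (f : ℝ → ℝ≥0∞), T (fun x => a * f x) = fun x => a * T f x)
    {c : ℝ≥0∞} (hc : c < ∞)
    (hT_mono : ∀ f g : ℝ → ℝ≥0∞, (∀ᵐ x ∂(volume.restrict (Ioi (0 : ℝ))), f x ≤ g x) →
      ∀ᵐ x ∂(volume.restrict (Ioi (0 : ℝ))), T f x ≤ c * T g x) :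
    IsQuasiMonotone (volume.restrict (Ioi (0 : ℝ))) c fun f => Lnorm β w (T f) := by
  intro a ha f g hfg
  refine Lnorm_le_const_mul hβ w (by finiteness) ?_
  simpa only [hT_smul, mul_assoc] using hT_mono f _ hfg

/-- Corollary 3.9: `‖T(∫₀ˣ h)‖_{β,w} ≤ C ∫₀^∞ h V⁻¹` for all nonnegative measurable `h` iff
`‖T_{V^{2(1-1/δ)}}((∫₀ˣ h^δ V)^{1/δ})‖_{β,w} ≤ C' ∫₀^∞ h v^{1-1/δ}` for all nonnegative
measurable `h`. -/
theorem selfimprove_s_one_iterated (β : ℝ≥0∞) (hβ : 0 < β) (δ : ℝ) (hδ : 0 < δ) (hδ1 : δ ≤ 1)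
    (T : (ℝ → ℝ≥0∞) → ℝ → ℝ≥0∞)
    (hT1 : ∀ (a : ℝ≥0∞) (f : ℝ → ℝ≥0∞), T (fun x => a * f x) = fun x => a * T f x)
    (hT2 : ∃ c : ℝ≥0∞, 0 < c ∧ c < ∞ ∧ ∀ f g : ℝ → ℝ≥0∞,
      (∀ᵐ x ∂(volume.restrict (Ioi (0:ℝ))), f x ≤ g x) →
      ∀ᵐ x ∂(volume.restrict (Ioi (0:ℝ))), T f x ≤ c * T g x)
    (hT3 : ∃ c : ℝ≥0∞, 0 < c ∧ c < ∞ ∧ ∀ (f : ℝ → ℝ≥0∞) (a : ℝ≥0∞),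
      ∀ᵐ x ∂(volume.restrict (Ioi (0:ℝ))),
        T (fun y => f y + a) x ≤ c * (T f x + a * T (fun _ => 1) x))
    (v w : ℝ → ℝ≥0∞) (hv : Measurable v) (hw : Measurable w)
    (hVfin : ∀ x > (0:ℝ), Vint v x < ∞) :
    (∃ C : ℝ≥0∞, C < ∞ ∧ ∀ h : ℝ → ℝ≥0∞, Measurable h →
        Lnorm β w (T (fun x => ∫⁻ τ in Ioc (0:ℝ) x, h τ))
          ≤ C * ∫⁻ t in Ioi (0:ℝ), h t / Vint v t)
    ↔ (∃ C' : ℝ≥0∞, C' < ∞ ∧ ∀ h : ℝ → ℝ≥0∞, Measurable h →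
        Lnorm β w (T (fun x =>
            (∫⁻ t in Ioc (0:ℝ) x, h t ^ δ * Vint v t) ^ (1/δ) *
              (Vint v x) ^ (2*(1 - 1/δ))))
          ≤ C' * ∫⁻ t in Ioi (0:ℝ), h t * v t ^ (1 - 1/δ)) := by
  obtain ⟨c, -, hc, hT⟩ := hT2
  have h := selfimprove_s_one_iterated_general hδ hδ1 hc (isQuasiMonotone_Lnorm_comp hβ w hT1 hc hT)
    hv (ae_restrict_of_forall_mem measurableSet_Ioi (by rwa [lprimitive_restrict_Ioi]))
  simp only [powerPrimitive_restrict_Ioi, lprimitive_restrict_Ioi] at h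
  exact h
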